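/- Let N be a positive natural number, a, b ∈ ℝ, and let S be the N×N symmetric tridiagonal Toeplitz matrix with S(j, k) = a if j = k, b if |j − k| = 1, and 0 otherwise. Let R be the N×N matrix with entries R(j, k) = sin(j k π / (N + 1)), and let Λ be the diagonal matrix with diagonal entries λ_k = a + 2 b cos(k π / (N + 1)). Then for every natural number l, the l-th matrix power satisfies S^l = (2/(N + 1)) · R · Λ^l · R. -/

import Mathlib

open Real Matrix

lemma aux_tel (x : ℝ) (N : ℕ) :
    2 * sin (x / 2) * ∑ k ∈ Finset.range N, cos (((k : ℝ) + 1) * x)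
      = sin (((N : ℝ) + 1 / 2) * x) - sin (x / 2) := by
  induction N with
  | zero => simp; ring_nf
  | succ n ih =>
    rw [Finset.sum_range_succ, mul_add, ih]
    have h1 : sin (((n : ℝ) + 1 / 2) * x) = sin (((n : ℝ) + 1) * x - x / 2) := by ring_nf
    have h2 : sin ((((n + 1 : ℕ) : ℝ) + 1 / 2) * x) = sin (((n : ℝ) + 1) * x + x / 2) := by
      push_cast; ring_nf
    rw [h1, h2, sin_sub, sin_add]
    ring

lemma aux_cos (N : ℕ) (p : ℤ) (hp : p ≠ 0) (h1 : |p| < 2 * ((N : ℤ) + 1)) :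
    ∑ k ∈ Finset.range N, cos (((k : ℝ) + 1) * ((p : ℝ) * π / (N + 1)))
      = (-cos (p * π) - 1) / 2 := by
  have hN : ((N : ℝ) + 1) ≠ 0 := by positivity
  set x : ℝ := (p : ℝ) * π / (N + 1) with hx
  have hs : sin (x / 2) ≠ 0 := by
    intro h
    rw [sin_eq_zero_iff] at h
    obtain ⟨n, hn⟩ := h
    have h2 : ((n * (2 * ((N : ℤ) + 1)) : ℤ) : ℝ) = (p : ℝ) := by
      push_cast
      rw [hx] at hn
      field_simp at hn
      have := pi_ne_zero
      linarith
    have h3 : n * (2 * ((N : ℤ) + 1)) = p := by exact_mod_cast h2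
    apply hp
    exact Int.eq_zero_of_abs_lt_dvd (Dvd.intro_left n h3) h1
  have ht := aux_tel x N
  have h4 : ((N : ℝ) + 1 / 2) * x = p * π - x / 2 := by
    rw [hx]; field_simp; ring
  rw [h4, sin_sub, sin_int_mul_pi] at ht
  apply mul_left_cancel₀ hs
  linarith

lemma aux_RR (N : ℕ) (j m : Fin N) :
    ∑ k : Fin N, sin (((j : ℕ) + 1) * ((k : ℕ) + 1) * π / (N + 1))
        * sin (((k : ℕ) + 1) * ((m : ℕ) + 1) * π / (N + 1))
      = if j = m then ((N : ℝ) + 1) / 2 else 0 := by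
  have hj := j.2
  have hm := m.2
  rw [Fin.sum_univ_eq_sum_range (fun k : ℕ => sin (((j : ℕ) + 1) * ((k : ℝ) + 1) * π / (N + 1))
        * sin (((k : ℝ) + 1) * ((m : ℕ) + 1) * π / (N + 1)))]
  have e : ∀ k : ℕ, sin (((j : ℕ) + 1) * ((k : ℝ) + 1) * π / (N + 1))
        * sin (((k : ℝ) + 1) * ((m : ℕ) + 1) * π / (N + 1)) =
      (cos (((k : ℝ) + 1) * ((((j : ℤ) - (m : ℤ) : ℤ) : ℝ) * π / (N + 1))) -
       cos (((k : ℝ) + 1) * ((((j : ℤ) + (m : ℤ) + 2 : ℤ) : ℝ) * π / (N + 1)))) / 2 := by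
    intro k
    have e1 : ((k : ℝ) + 1) * ((((j : ℤ) - (m : ℤ) : ℤ) : ℝ) * π / (N + 1)) =
      ((j : ℕ) + 1) * ((k : ℝ) + 1) * π / (N + 1) -
        ((k : ℝ) + 1) * ((m : ℕ) + 1) * π / (N + 1) := by push_cast; ring
    have e2 : ((k : ℝ) + 1) * ((((j : ℤ) + (m : ℤ) + 2 : ℤ) : ℝ) * π / (N + 1)) =
      ((j : ℕ) + 1) * ((k : ℝ) + 1) * π / (N + 1) +
        ((k : ℝ) + 1) * ((m : ℕ) + 1) * π / (N + 1) := by push_cast; ring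
    rw [e1, e2, cos_sub, cos_add]
    ring
  simp_rw [e]
  rw [← Finset.sum_div, Finset.sum_sub_distrib,
    aux_cos N ((j : ℤ) + (m : ℤ) + 2) (by omega) (by rw [abs_lt]; omega)]
  have hc : cos ((((j : ℤ) + (m : ℤ) + 2 : ℤ) : ℝ) * π)
      = cos ((((j : ℤ) - (m : ℤ) : ℤ) : ℝ) * π) := by
    rw [← cos_add_int_mul_two_pi ((((j : ℤ) - (m : ℤ) : ℤ) : ℝ) * π) ((m : ℤ) + 1)]
    congr 1
    push_cast; ring
  rw [hc]
  split_ifs with h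
  · subst h
    simp
    ring
  · have : (j : ℕ) ≠ m := fun h' => h (Fin.ext h')
    rw [aux_cos N ((j : ℤ) - (m : ℤ)) (by omega) (by rw [abs_lt]; omega)]
    ring

lemma aux_S (N : ℕ) (a b : ℝ) (f : ℕ → ℝ) (h0 : f 0 = 0) (h1 : f (N + 1) = 0) (j : Fin N) :
    ∑ k : Fin N, (if (j : ℕ) = k then a
      else if ((j : ℤ) - (k : ℤ)).natAbs = 1 then b else 0) * f (k + 1)
      = a * f (j + 1) + b * f j + b * f (j + 2) := by
  have hj := j.2
  rw [Fin.sum_univ_eq_sum_range (fun k : ℕ => (if (j : ℕ) = k then a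
      else if ((j : ℤ) - (k : ℤ)).natAbs = 1 then b else 0) * f (k + 1))]
  generalize (j : ℕ) = i at *
  have e : ∀ k : ℕ, (if i = k then a
      else if ((i : ℤ) - (k : ℤ)).natAbs = 1 then b else 0) * f (k + 1) =
      (if i = k then a * f (i + 1) else 0) + (if i - 1 = k then (if i = 0 then 0 else b * f i) else 0)
       + (if i + 1 = k then b * f (i + 2) else 0) := by
    intro k
    by_cases c1 : i = k
    · subst c1
      have : i - 1 = i → i = 0 := by omega
      simp; intro h h'; omega
    by_cases c2 : i = k + 1
    · subst c2; simp
      intro h; omega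
    by_cases c3 : i + 1 = k
    · subst c3
      have c6 : ¬ i - 1 = i + 1 := by omega
      simp [c6]
    have c4 : ¬ ((i : ℤ) - (k : ℤ)).natAbs = 1 := by omega
    by_cases c5 : i = 0
    · simp only [if_neg c1, if_neg c3, if_neg c4, if_pos c5, ite_self]
      ring
    have c6 : ¬ i - 1 = k := by omega
    simp [c1, c3, c4, c6]
  simp_rw [e]
  rw [Finset.sum_add_distrib, Finset.sum_add_distrib, Finset.sum_ite_eq, Finset.sum_ite_eq,
    Finset.sum_ite_eq]
  have m1 : i ∈ Finset.range N := by simpa using hj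
  have m2 : i - 1 ∈ Finset.range N := by simp; omega
  rw [if_pos m1, if_pos m2]
  congr 1
  · congr 1
    split_ifs with h
    · rw [h, h0, mul_zero]
    · rfl
  · split_ifs with h
    · rfl
    · have : i + 2 = N + 1 := by simp at h; omega
      rw [this, h1, mul_zero]

/-- Spectral power formula for the symmetric tridiagonal Toeplitz matrix:
S^l = (2/(N+1)) · R · Λ^l · R with the sine eigenvector matrix R and the
diagonal eigenvalue matrix Λ.  (Indices are 0-based `Fin N`, shifted by one.) -/
theorem stmt_11 (N : ℕ) (hN : 0 < N) (a b : ℝ)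
    (S : Matrix (Fin N) (Fin N) ℝ)
    (hS : ∀ j k : Fin N, S j k =
      if (j : ℕ) = k then a
      else if ((j : ℤ) - (k : ℤ)).natAbs = 1 then b else 0)
    (R : Matrix (Fin N) (Fin N) ℝ)
    (hR : ∀ j k : Fin N,
      R j k = Real.sin (((j : ℕ) + 1) * ((k : ℕ) + 1) * π / (N + 1)))
    (Λ : Matrix (Fin N) (Fin N) ℝ)
    (hΛ : Λ = Matrix.diagonal
      (fun k : Fin N => a + 2 * b * Real.cos (((k : ℕ) + 1) * π / (N + 1)))) :
    ∀ l : ℕ, S ^ l = (2 / ((N : ℝ) + 1)) • (R * Λ ^ l * R) := by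
  have hN1 : ((N : ℝ) + 1) ≠ 0 := by positivity
  have hRR : (2 / ((N : ℝ) + 1)) • (R * R) = 1 := by
    ext j m
    rw [Matrix.smul_apply, Matrix.mul_apply, Matrix.one_apply]
    simp_rw [hR]
    rw [aux_RR]
    split_ifs
    · rw [smul_eq_mul]; field_simp
    · simp
  have hSR : S * R = R * Λ := by
    ext j m
    rw [hΛ, Matrix.mul_diagonal, Matrix.mul_apply, hR]
    simp_rw [hR, hS]
    have h := aux_S N a b (fun k : ℕ => sin ((k : ℝ) * (((m : ℕ) + 1) * π / (N + 1))))
      (by simp) (by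
        have : ((N + 1 : ℕ) : ℝ) * (((m : ℕ) + 1) * π / (N + 1)) = ((m + 1 : ℕ) : ℝ) * π := by
          push_cast; field_simp
        simp only [this]
        exact sin_nat_mul_pi _) j
    have e : ∀ k : Fin N, sin (((k : ℕ) + 1) * ((m : ℕ) + 1) * π / (N + 1)) =
        sin (((k + 1 : ℕ) : ℝ) * (((m : ℕ) + 1) * π / (N + 1))) := by
      intro k; push_cast; ring_nf
    simp_rw [e]
    rw [h]
    set φ : ℝ := ((m : ℕ) + 1) * π / (N + 1)
    have e1 : ((j : ℕ) : ℝ) * φ = ((j + 1 : ℕ) : ℝ) * φ - φ := by push_cast; ring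
    have e2 : ((j + 2 : ℕ) : ℝ) * φ = ((j + 1 : ℕ) : ℝ) * φ + φ := by push_cast; ring
    rw [e1, e2, sin_sub, sin_add]
    ring
  intro l
  have hl : S ^ l * R = R * Λ ^ l := by
    induction l with
    | zero => simp
    | succ n ih => rw [pow_succ, Matrix.mul_assoc, hSR, ← Matrix.mul_assoc, ih, Matrix.mul_assoc,
        ← pow_succ]
  rw [← hl, Matrix.mul_assoc, ← Matrix.mul_smul, hRR, Matrix.mul_one]
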